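/- For every ρ ∈ [-1,1], the function φ(ρ) = (2/π)(ρ·arcsin(ρ) + sqrt(1-ρ²) - 1) satisfies 0 ≤ φ(ρ) ≤ ((π-2)/π)·ρ². -/

import Mathlib

open Real

/-!
Substitute `ρ = sin t`; since everything is even, take `0 ≤ t ≤ π / 2`. The claim becomes
`0 ≤ t sin t + cos t - 1 ≤ (π / 2 - 1) sin² t`.

The lower bound follows from `t sin t ≥ sin² t = 1 - cos² t` and `cos² t ≤ cos t`.
For the upper bound, the ratio `(t sin t + cos t - 1) / sin² t` is nondecreasing on `(0, π / 2]` and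
equals `π / 2 - 1` at `π / 2`. The sign of its derivative is that of `2 - 2 cos t - t sin t`, which
with `t = 2u` is `4 sin u (sin u - u cos u)`, and this is nonnegative because `u ≤ tan u`
(`two_sub_two_cos_sub_nonneg`).
-/

/-- The numerator of the derivative of `(t sin t + cos t - 1) / sin² t`, up to the positive factor
`sin t cos t`, is nonnegative. -/
lemma two_sub_two_cos_sub_nonneg {t : ℝ} (h0 : 0 ≤ t) (h1 : t ≤ π / 2) :
    0 ≤ 2 - 2 * cos t - t * sin t := by
  obtain ⟨u, rfl⟩ : ∃ u, t = 2 * u := ⟨t / 2, by ring⟩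
  have hpi := pi_pos
  have hc : 0 < cos u := cos_pos_of_mem_Ioo ⟨by linarith, by linarith⟩
  have hs : 0 ≤ sin u := sin_nonneg_of_nonneg_of_le_pi (by linarith) (by linarith)
  have hu : u * cos u ≤ sin u := by
    have h := le_tan (x := u) (by linarith) (by linarith)
    rwa [tan_eq_sin_div_cos, le_div_iff₀ hc] at h
  have key : 2 - 2 * cos (2 * u) - 2 * u * sin (2 * u) = 4 * sin u * (sin u - u * cos u) := by
    rw [sin_two_mul, cos_two_mul]
    linear_combination (-4) * sin_sq_add_cos_sq u
  rw [key]
  exact mul_nonneg (by positivity) (by linarith)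

lemma monotoneOn_ratio :
    MonotoneOn (fun t : ℝ => (t * sin t + cos t - 1) / sin t ^ 2) (Set.Ioc 0 (π / 2)) := by
  have hpi := pi_pos
  have hsin : ∀ t ∈ Set.Ioc 0 (π / 2), 0 < sin t := fun t ht =>
    sin_pos_of_pos_of_lt_pi ht.1 (by linarith [ht.2])
  have hd : ∀ t ∈ Set.Ioo 0 (π / 2),
      HasDerivAt (fun t : ℝ => (t * sin t + cos t - 1) / sin t ^ 2)
        (cos t * sin t * (2 - 2 * cos t - t * sin t) / (sin t ^ 2) ^ 2) t := by
    intro t ht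
    have hs := hsin t ⟨ht.1, ht.2.le⟩
    have h := ((((hasDerivAt_id t).mul (hasDerivAt_sin t)).add (hasDerivAt_cos t)).sub_const 1).div
      ((hasDerivAt_sin t).pow 2) (pow_ne_zero 2 hs.ne')
    refine HasDerivAt.congr_deriv h ?_
    simp only [Pi.add_apply, Pi.mul_apply, Pi.pow_apply, id]
    push_cast
    ring
  refine monotoneOn_of_deriv_nonneg (convex_Ioc _ _) ?_ ?_ ?_
  · exact ContinuousOn.div (by fun_prop) (by fun_prop)
      fun t ht => pow_ne_zero 2 (hsin t ht).ne'
  · rw [interior_Ioc]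
    exact fun t ht => (hd t ht).differentiableAt.differentiableWithinAt
  · rw [interior_Ioc]
    intro t ht
    rw [(hd t ht).deriv]
    have hs := hsin t ⟨ht.1, ht.2.le⟩
    have hc : 0 < cos t := cos_pos_of_mem_Ioo ⟨by linarith [ht.1], ht.2⟩
    have hk := two_sub_two_cos_sub_nonneg ht.1.le ht.2.le
    positivity

lemma trig_bounds {t : ℝ} (h0 : 0 ≤ t) (h1 : t ≤ π / 2) :
    0 ≤ t * sin t + cos t - 1 ∧ t * sin t + cos t - 1 ≤ (π / 2 - 1) * sin t ^ 2 := by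
  have hpi := pi_pos
  have hs : 0 ≤ sin t := sin_nonneg_of_nonneg_of_le_pi h0 (by linarith)
  have hc : 0 ≤ cos t := cos_nonneg_of_mem_Icc ⟨by linarith, h1⟩
  constructor
  · nlinarith [mul_le_mul_of_nonneg_right (sin_le h0) hs, sin_sq_add_cos_sq t,
      mul_nonneg hc (sub_nonneg.2 (cos_le_one t))]
  · rcases h0.eq_or_lt with rfl | hpos
    · simp
    · have hs' : 0 < sin t := sin_pos_of_pos_of_lt_pi hpos (by linarith)
      have h := monotoneOn_ratio ⟨hpos, h1⟩ ⟨by linarith, le_refl (π / 2)⟩ h1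
      simp only [sin_pi_div_two, cos_pi_div_two] at h
      rw [div_le_iff₀ (by positivity)] at h
      linarith

theorem phi_bounds (ρ : ℝ) (hρ : ρ ∈ Set.Icc (-1 : ℝ) 1) :
    0 ≤ (2 / π) * (ρ * arcsin ρ + Real.sqrt (1 - ρ ^ 2) - 1) ∧
      (2 / π) * (ρ * arcsin ρ + Real.sqrt (1 - ρ ^ 2) - 1) ≤ ((π - 2) / π) * ρ ^ 2 := by
  have hpi := pi_pos
  have key : 0 ≤ ρ * arcsin ρ + √(1 - ρ ^ 2) - 1 ∧
      ρ * arcsin ρ + √(1 - ρ ^ 2) - 1 ≤ (π / 2 - 1) * ρ ^ 2 := by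
    rw [← cos_arcsin]
    have hsin := sin_arcsin hρ.1 hρ.2
    rcases le_total 0 (arcsin ρ) with h | h
    · have := trig_bounds h (arcsin_le_pi_div_two ρ)
      rwa [hsin, mul_comm] at this
    · have := trig_bounds (neg_nonneg.2 h) (by linarith [neg_pi_div_two_le_arcsin ρ])
      rwa [sin_neg, cos_neg, hsin, neg_mul_neg, neg_sq, mul_comm] at this
  refine ⟨mul_nonneg (by positivity) key.1, ?_⟩
  calc (2 / π) * (ρ * arcsin ρ + √(1 - ρ ^ 2) - 1)
      ≤ (2 / π) * ((π / 2 - 1) * ρ ^ 2) := mul_le_mul_of_nonneg_left key.2 (by positivity)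
    _ = ((π - 2) / π) * ρ ^ 2 := by field_simp
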